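/- Fix n ≥ 2, m ≥ n, and q ≥ 1. Let Z be the S2S core tensor for arity n with m segments of size q having a single nonzero block: Z_{j_0, j_1, ..., j_n} = I_1^n when (j_0, j_1, j_2, ..., j_n) = (1, 1, 2, ..., n), and Z_{j_0,...,j_n} = I_0^n otherwise. Then for all vectors r, e_1, ..., e_n ∈ ℝ^{mq}, the S2S score satisfies f_z(r, e_1, ..., e_n; Z) = ⟨r^{(1)}, e_1^{(1)}, e_2^{(2)}, ..., e_n^{(n)}⟩; that is, under this sparse core tensor the i-th segment of the shared entity embedding acts as a position-specific embedding for argument position i. -/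

import Mathlib

open Finset

/-- The `j`-th segment (of length `q`) of a vector in `ℝ^(M·q)`:
coordinates `(j-1)q+1` through `jq` (1-based), i.e. `j·q, …, j·q + q - 1` (0-based). -/
def seg (M q : ℕ) (v : Fin (M * q) → ℝ) (j : Fin M) : Fin q → ℝ :=
  fun k => v (finProdFinEquiv (j, k))

/-- Multilinear inner product of `n+1` vectors in `ℝ^q`. -/
def mip (n q : ℕ) (v : Fin (n + 1) → Fin q → ℝ) : ℝ :=
  ∑ k : Fin q, ∏ i : Fin (n + 1), v i k

/-- The `(n+1)`-order superdiagonal tensor `I_v^n` of size `q` in each mode: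
`v` when all indices coincide, `0` elsewhere. -/
def diagT (n q : ℕ) (v : ℝ) : (Fin (n + 1) → Fin q) → ℝ :=
  fun k => if ∀ i, k i = k 0 then v else 0

/-- Tucker product of an `(n+1)`-order tensor of size `q` in each mode with
vectors `u 0, …, u n ∈ ℝ^q`. -/
def tucker (n q : ℕ) (G : (Fin (n + 1) → Fin q) → ℝ)
    (u : Fin (n + 1) → Fin q → ℝ) : ℝ :=
  ∑ k : Fin (n + 1) → Fin q, G k * ∏ i : Fin (n + 1), u i (k i)

/-- S2S score of vectors `vs 0 = r, vs 1 = e_1, …, vs n = e_n ∈ ℝ^(m·q)` with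
an S2S core tensor `Z` for arity `n` with `m` segments of size `q`. -/
def s2sScore (n m q : ℕ)
    (Z : (Fin (n + 1) → Fin m) → (Fin (n + 1) → Fin q) → ℝ)
    (vs : Fin (n + 1) → Fin (m * q) → ℝ) : ℝ :=
  ∑ j : Fin (n + 1) → Fin m, tucker n q (Z j) (fun i => seg m q (vs i) (j i))

/-- S2S score computed on the first `m` segments of vectors in `ℝ^(M·q)` (`m ≤ M`). -/
def s2sScoreFirst (n m M q : ℕ) (h : m ≤ M)
    (Z : (Fin (n + 1) → Fin m) → (Fin (n + 1) → Fin q) → ℝ)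
    (vs : Fin (n + 1) → Fin (M * q) → ℝ) : ℝ :=
  ∑ j : Fin (n + 1) → Fin m,
    tucker n q (Z j) (fun i => seg M q (vs i) (Fin.castLE h (j i)))

/-- A sparse core tensor: every block lies in `{-I_1^n, I_0^n, I_1^n}`. -/
def SparseCore (n m q : ℕ)
    (Z : (Fin (n + 1) → Fin m) → (Fin (n + 1) → Fin q) → ℝ) : Prop :=
  ∀ j, Z j = diagT n q (-1) ∨ Z j = diagT n q 0 ∨ Z j = diagT n q 1

section

variable {n m q : ℕ}

theorem diagT_const (v : ℝ) (a : Fin q) : diagT n q v (Function.const _ a) = v :=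
  if_pos fun _ => rfl

theorem diagT_of_notMem_range_const (v : ℝ) {k : Fin (n + 1) → Fin q}
    (hk : k ∉ Set.range (Function.const (Fin (n + 1)))) : diagT n q v k = 0 :=
  if_neg fun h => hk ⟨k 0, funext fun i => (h i).symm⟩

theorem tucker_diagT (v : ℝ) (u : Fin (n + 1) → Fin q → ℝ) :
    tucker n q (diagT n q v) u = v * mip n q u := by
  rw [tucker, mip, mul_sum]
  symm
  refine Fintype.sum_of_injective (Function.const (Fin (n + 1))) Function.const_injective
    _ _ (fun k hk => ?_) (fun a => ?_)
  · rw [diagT_of_notMem_range_const v hk, zero_mul]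
  · simp only [diagT_const, Function.const_apply]

theorem s2sScore_diagT (w : (Fin (n + 1) → Fin m) → ℝ) (vs : Fin (n + 1) → Fin (m * q) → ℝ) :
    s2sScore n m q (fun j => diagT n q (w j)) vs =
      ∑ j, w j * mip n q (fun i => seg m q (vs i) (j i)) :=
  sum_congr rfl fun j _ => tucker_diagT (w j) _

theorem s2s_position_specific_general (p : Fin (n + 1) → Fin m)
    (Z : (Fin (n + 1) → Fin m) → (Fin (n + 1) → Fin q) → ℝ)
    (hZ : ∀ j, Z j = if j = p then diagT n q 1 else diagT n q 0)
    (vs : Fin (n + 1) → Fin (m * q) → ℝ) :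
    s2sScore n m q Z vs = mip n q (fun i => seg m q (vs i) (p i)) := by
  have hZ_weights : Z = fun j => diagT n q (if j = p then 1 else 0) :=
    funext fun j => (hZ j).trans (apply_ite (diagT n q) (j = p) 1 0).symm
  rw [hZ_weights, s2sScore_diagT]
  simp only [ite_mul, one_mul, zero_mul, sum_ite_eq', mem_univ, if_true]

end

/-- the S2S core tensor whose single nonzero block is `I_1^n` at block index
`(1, 1, 2, …, n)` (1-based; `(0, 0, 1, …, n-1)` 0-based) computes the multilinear inner
product `⟨r^(1), e_1^(1), e_2^(2), …, e_n^(n)⟩`: the `i`-th segment of the shared entity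
embedding acts as a position-specific embedding for argument position `i`. -/
theorem s2s_position_specific (n m q : ℕ) (hn : 2 ≤ n) (hm : n ≤ m) (hq : 1 ≤ q)
    (Z : (Fin (n + 1) → Fin m) → (Fin (n + 1) → Fin q) → ℝ)
    (hZ : ∀ j, Z j =
      if j = Fin.cases (⟨0, by omega⟩ : Fin m) (fun i : Fin n => Fin.castLE hm i)
      then diagT n q 1 else diagT n q 0)
    (vs : Fin (n + 1) → Fin (m * q) → ℝ) :
    s2sScore n m q Z vs
      = mip n q (Fin.cases (seg m q (vs 0) (⟨0, by omega⟩ : Fin m))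
          (fun i : Fin n => seg m q (vs i.succ) (Fin.castLE hm i))) := by
  rw [s2s_position_specific_general _ Z hZ vs]
  exact congrArg (mip n q) (funext (Fin.cases rfl fun _ => rfl))
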